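/- arXiv:2307.05401 — 3 statements merged into one kernel-verified Lean document; each statement's English description precedes it below -/
import Mathlib

section
/- Let F : ℝⁿ → [0, ∞] be measurable and define its Kelvin image G(z) := |z|^{−(2m+n)} F(z/|z|²) for z ≠ 0 (and G(0) arbitrary). Then for every nonzero x ∈ ℝⁿ one has, as an identity in [0, ∞], ∫_{ℝⁿ} |x−z|^{2m−n} G(z) dz = |x|^{2m−n} ∫_{ℝⁿ} | x/|x|² − y |^{2m−n} F(y) dy. -/
open MeasureTheory
open scoped ENNReal

/-!
The inversion `ι z = z / |z|²` satisfies `|x - z| = |x| |z| |ι x - ι z|`, and its derivative at `z`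
is `|z|⁻²` times a reflection, so its Jacobian is `|z|^{-2n}`. Substituting `y = ι z` in
`∫ |ι x - y|^s F y dy` therefore produces the weight `|z|^{-(s + 2n)}`, for every real `s`;
the Kelvin image is the case `s = 2m - n`.
-/

open EuclideanGeometry Module

theorem ofReal_norm_pow_eq_enorm_rpow {V : Type*} [SeminormedAddGroup V] (v : V) (k : ℕ) :
    ENNReal.ofReal (‖v‖ ^ k) = ‖v‖ₑ ^ (k : ℝ) := by
  rw [ENNReal.ofReal_pow (norm_nonneg v), ofReal_norm, ENNReal.rpow_natCast]

section

variable {E : Type*} [NormedAddCommGroup E] [InnerProductSpace ℝ E]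

theorem inversion_zero_one (z : E) : inversion 0 1 z = (‖z‖ ^ 2)⁻¹ • z := by
  simp [inversion]

theorem image_inversion_compl_center {P : Type*} [MetricSpace P] [NormedAddTorsor E P] (c : P)
    {R : ℝ} (hR : R ≠ 0) :
    inversion c R '' {c}ᶜ = {c}ᶜ := by
  rw [Set.image_compl_eq (inversion_bijective c hR), Set.image_singleton, inversion_self]

theorem enorm_sub_eq_mul_enorm_inversion_sub {x z : E} (hx : x ≠ 0) (hz : z ≠ 0) :
    ‖x - z‖ₑ = ‖x‖ₑ * ‖z‖ₑ * ‖inversion 0 1 x - inversion 0 1 z‖ₑ := by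
  have hdist := dist_inversion_inversion hx hz 1
  simp only [dist_eq_norm, sub_zero] at hdist
  have hnorm : ‖x - z‖ = ‖x‖ * ‖z‖ * ‖inversion 0 1 x - inversion 0 1 z‖ := by
    have hx_norm : ‖x‖ ≠ 0 := norm_ne_zero_iff.2 hx
    have hz_norm : ‖z‖ ≠ 0 := norm_ne_zero_iff.2 hz
    rw [hdist]
    field_simp
  simp only [← ofReal_norm, hnorm, ENNReal.ofReal_mul, norm_nonneg, mul_nonneg]

theorem abs_det_smul_reflection (a : ℝ) (K : Submodule ℝ E) [FiniteDimensional ℝ K] :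
    |(a • (K.reflection : E →L[ℝ] E)).det| = |a| ^ finrank ℝ E := by
  have hdet : (a • (K.reflection : E →L[ℝ] E)).det =
      a ^ finrank ℝ E * (-1) ^ finrank ℝ Kᗮ := by
    rw [← K.det_reflection]
    exact LinearMap.det_smul a K.reflection.toLinearMap
  rw [hdet, abs_mul, abs_pow, abs_neg_one_pow, mul_one]

variable [FiniteDimensional ℝ E] [MeasurableSpace E] [BorelSpace E]
  (μ : Measure E) [μ.IsAddHaarMeasure]

theorem lintegral_eq_lintegral_inversion [Nontrivial E] (c : E) {R : ℝ} (hR : R ≠ 0)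
    (f : E → ℝ≥0∞) :
    ∫⁻ y, f y ∂μ =
      ∫⁻ z, ENNReal.ofReal ((R / dist z c) ^ (2 * finrank ℝ E)) * f (inversion c R z) ∂μ := by
  calc ∫⁻ y, f y ∂μ
      = ∫⁻ y in inversion c R '' {c}ᶜ, f y ∂μ := by
        rw [image_inversion_compl_center c hR, restrict_compl_singleton]
    _ = ∫⁻ z in {c}ᶜ, ENNReal.ofReal ((R / dist z c) ^ (2 * finrank ℝ E)) *
          f (inversion c R z) ∂μ := by
        rw [lintegral_image_eq_lintegral_abs_det_fderiv_mul μ (measurableSet_singleton c).compl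
          (fun z hz ↦ (hasFDerivAt_inversion hz).hasFDerivWithinAt)
          (inversion_injective c hR).injOn]
        simp only [abs_det_smul_reflection, abs_sq, ← pow_mul]
    _ = _ := by rw [restrict_compl_singleton]

theorem lintegral_eq_lintegral_inversion_zero_one [Nontrivial E] (f : E → ℝ≥0∞) :
    ∫⁻ y, f y ∂μ =
      ∫⁻ z, ‖z‖ₑ ^ (-(2 * finrank ℝ E : ℝ)) * f (inversion 0 1 z) ∂μ := by
  rw [lintegral_eq_lintegral_inversion μ 0 one_ne_zero f]
  refine lintegral_congr_ae ?_
  filter_upwards [Measure.ae_ne μ 0] with z hz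
  rw [dist_zero_right, one_div, inv_pow, ENNReal.ofReal_inv_of_pos (by positivity),
    ofReal_norm_pow_eq_enorm_rpow, ENNReal.rpow_neg]
  norm_cast

theorem stmt2_general (s : ℝ) (F G : E → ℝ≥0∞)
    (hG : ∀ z, z ≠ 0 → G z = ‖z‖ₑ ^ (-(s + 2 * finrank ℝ E)) * F ((‖z‖ ^ 2)⁻¹ • z))
    (x : E) (hx : x ≠ 0) :
    ∫⁻ z, ‖x - z‖ₑ ^ s * G z ∂μ =
      ‖x‖ₑ ^ s * ∫⁻ y, ‖(‖x‖ ^ 2)⁻¹ • x - y‖ₑ ^ s * F y ∂μ := by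
  have : Nontrivial E := ⟨x, 0, hx⟩
  have hx_rpow : ‖x‖ₑ ^ s ≠ ∞ := ENNReal.rpow_ne_top_of_ne_zero (enorm_ne_zero.2 hx) enorm_ne_top
  simp only [← inversion_zero_one] at hG ⊢
  rw [lintegral_eq_lintegral_inversion_zero_one μ (fun y ↦ ‖inversion 0 1 x - y‖ₑ ^ s * F y),
    ← lintegral_const_mul' _ _ hx_rpow]
  refine lintegral_congr_ae ?_
  filter_upwards [Measure.ae_ne μ 0] with z hz
  have hz_cancel : ‖z‖ₑ ^ s * ‖z‖ₑ ^ (-s) = 1 := by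
    rw [← ENNReal.rpow_add _ _ (enorm_ne_zero.2 hz) enorm_ne_top, add_neg_cancel,
      ENNReal.rpow_zero]
  set d := ‖inversion 0 1 x - inversion 0 1 z‖ₑ
  calc ‖x - z‖ₑ ^ s * G z
      = (‖x‖ₑ ^ s * ‖z‖ₑ ^ s * d ^ s) *
          (‖z‖ₑ ^ (-s) * ‖z‖ₑ ^ (-(2 * finrank ℝ E : ℝ)) * F (inversion 0 1 z)) := by
        rw [hG z hz, enorm_sub_eq_mul_enorm_inversion_sub hx hz, neg_add,
          ENNReal.rpow_add _ _ (enorm_ne_zero.2 hz) enorm_ne_top,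
          ENNReal.mul_rpow_of_ne_top (by finiteness) (by finiteness),
          ENNReal.mul_rpow_of_ne_top (by finiteness) (by finiteness)]
    _ = (‖z‖ₑ ^ s * ‖z‖ₑ ^ (-s)) *
          (‖x‖ₑ ^ s * (‖z‖ₑ ^ (-(2 * finrank ℝ E : ℝ)) * (d ^ s * F (inversion 0 1 z)))) := by
        ring
    _ = _ := by rw [hz_cancel, one_mul]

end

/-- Kelvin transform identity for the Riesz-type potential: if
`G(z) = |z|^{−(2m+n)} F(z/|z|²)` for `z ≠ 0`, then for every nonzero `x`,
`∫ |x−z|^{2m−n} G(z) dz = |x|^{2m−n} ∫ |x/|x|² − y|^{2m−n} F(y) dy`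
as an identity in `[0, ∞]`. -/
theorem stmt2 (n m : ℕ) (hn : 3 ≤ n) (hodd : Odd n) (hmn : n < 2 * m)
    (F G : EuclideanSpace ℝ (Fin n) → ℝ≥0∞) (hF : Measurable F)
    (hG : ∀ z : EuclideanSpace ℝ (Fin n), z ≠ 0 →
      G z = (ENNReal.ofReal (‖z‖ ^ (2 * m + n)))⁻¹ * F ((‖z‖ ^ 2)⁻¹ • z))
    (x : EuclideanSpace ℝ (Fin n)) (hx : x ≠ 0) :
    ∫⁻ z, ENNReal.ofReal (‖x - z‖ ^ (2 * m - n)) * G z =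
      ENNReal.ofReal (‖x‖ ^ (2 * m - n)) *
        ∫⁻ y, ENNReal.ofReal (‖(‖x‖ ^ 2)⁻¹ • x - y‖ ^ (2 * m - n)) * F y := by
  have hexp : ((2 * m + n : ℕ) : ℝ) = (2 * m - n : ℕ) + 2 * n := by norm_cast; omega
  simp only [ofReal_norm_pow_eq_enorm_rpow, hexp, ← ENNReal.rpow_neg] at hG ⊢
  exact stmt2_general volume _ F G (by simpa only [finrank_euclideanSpace_fin] using hG) x hx
end

section
/- Let P, Q : ℝⁿ → ℝ be polynomial functions (restrictions to ℝⁿ of real polynomials in n variables) of total degree at most 2m−n, and suppose that Q(x) = |x|^{2m−n} P(x/|x|²) for every nonzero x ∈ ℝⁿ. Then P ≡ 0 and Q ≡ 0. -/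
/-!
On the line through a unit vector `u`, the relation reads `Q (t u) = |t| ^ d P (t⁻¹ u)` with `d`
odd. Clearing denominators gives univariate polynomials `a` and `b` with `a t = |t| ^ d b t` for
`t ≠ 0`. Then `a = X ^ d b` because the two sides agree on the positive half-line, and
`a = -X ^ d b` because they agree on the negative one; hence `a = b = 0`. So `P` and `Q` vanish on
every line through the origin.
-/

section Univariate

open Polynomial

lemma eval_reverse_eq_pow_natDegree_mul_eval_inv {F : Type*} [Field F] (p : F[X]) {t : F}
    (ht : t ≠ 0) : p.reverse.eval t = t ^ p.natDegree * p.eval t⁻¹ := by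
  let _ : Invertible t⁻¹ := invertibleOfNonzero (inv_ne_zero ht)
  have hp : p.reverse.eval t * t⁻¹ ^ p.natDegree = p.eval t⁻¹ := by
    simpa [eval₂_id] using eval₂_reverse_mul_pow (RingHom.id F) t⁻¹ p
  rw [← hp, inv_pow]
  field_simp

variable {K : Type*} [Field K] [LinearOrder K] [IsStrictOrderedRing K] {d : ℕ}

lemma eq_zero_of_eval_eq_abs_pow_mul_eval (hd : Odd d) {a b : K[X]}
    (h : ∀ t ≠ 0, a.eval t = |t| ^ d * b.eval t) : a = 0 ∧ b = 0 := by
  have hpos : a = X ^ d * b :=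
    eq_of_infinite_eval_eq _ _ <| (Set.Ioi_infinite 0).mono fun t (ht : 0 < t) ↦ by
      simp [h t ht.ne', abs_of_pos ht]
  have hneg : a = -(X ^ d * b) :=
    eq_of_infinite_eval_eq _ _ <| (Set.Iio_infinite 0).mono fun t (ht : t < 0) ↦ by
      simp [h t ht.ne, abs_of_neg ht, hd.neg_pow]
  have ha : a = 0 := self_eq_neg.mp (hneg.trans (congrArg Neg.neg hpos.symm))
  have hb : X ^ d * b = 0 := hpos.symm.trans ha
  exact ⟨ha, (mul_eq_zero.mp hb).resolve_left (pow_ne_zero d X_ne_zero)⟩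

lemma eq_zero_of_eval_eq_abs_pow_mul_eval_inv (hd : Odd d) {p q : K[X]}
    (h : ∀ t ≠ 0, q.eval t = |t| ^ d * p.eval t⁻¹) : p = 0 ∧ q = 0 := by
  have hrev : ∀ t ≠ 0, (X ^ p.natDegree * q).eval t = |t| ^ d * p.reverse.eval t := by
    intro t ht
    rw [eval_mul, eval_pow, eval_X, h t ht, eval_reverse_eq_pow_natDegree_mul_eval_inv p ht,
      mul_left_comm]
  obtain ⟨hq, hp⟩ := eq_zero_of_eval_eq_abs_pow_mul_eval hd hrev
  exact ⟨reverse_eq_zero.mp hp,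
    (mul_eq_zero.mp hq).resolve_left (pow_ne_zero _ X_ne_zero)⟩

end Univariate

section LineRestriction

/-- The restriction `t ↦ F (t v)` of a polynomial function `F` to the line spanned by `v`, as a
univariate polynomial in the parameter `t`. -/
noncomputable def lineRestriction {σ R : Type*} [CommSemiring R] (v : σ → R)
    (F : MvPolynomial σ R) : Polynomial R :=
  MvPolynomial.aeval (fun i ↦ Polynomial.C (v i) * Polynomial.X) F

lemma eval_lineRestriction {σ R : Type*} [CommSemiring R] (v : σ → R) (F : MvPolynomial σ R)
    (t : R) : (lineRestriction v F).eval t = MvPolynomial.eval (t • v) F := by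
  have hpoint : (fun i ↦ Polynomial.aeval t (Polynomial.C (v i) * Polynomial.X)) = t • v := by
    funext i
    simpa using mul_comm (v i) t
  rw [lineRestriction, ← Polynomial.coe_aeval_eq_eval, MvPolynomial.comp_aeval_apply, hpoint,
    ← MvPolynomial.aeval_eq_eval]

lemma eq_zero_of_lineRestriction_eq_zero {ι : Type*} [Fintype ι] [Nonempty ι]
    {F : MvPolynomial ι ℝ}
    (h : ∀ u : EuclideanSpace ℝ ι, ‖u‖ = 1 → lineRestriction u F = 0) : F = 0 := by
  refine MvPolynomial.funext_set (fun _ ↦ {0}ᶜ) (fun _ ↦ (Set.finite_singleton 0).infinite_compl)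
    fun x hx ↦ ?_
  have hx0 : WithLp.toLp 2 x ≠ 0 := by
    obtain ⟨i⟩ := ‹Nonempty ι›
    exact fun h0 ↦ hx i trivial (congrArg (fun y : EuclideanSpace ℝ ι ↦ y i) h0)
  have hline := congrArg (Polynomial.eval ‖WithLp.toLp 2 x‖) (h _ (NormedSpace.norm_normalize hx0))
  rwa [eval_lineRestriction, ← WithLp.ofLp_smul, NormedSpace.norm_smul_normalize,
    Polynomial.eval_zero, ← map_zero (MvPolynomial.eval x)] at hline

end LineRestriction

lemma inv_norm_sq_smul_smul_of_norm_eq_one {E : Type*} [NormedAddCommGroup E] [NormedSpace ℝ E]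
    {u : E} (hu : ‖u‖ = 1) (t : ℝ) : (‖t • u‖ ^ 2)⁻¹ • t • u = t⁻¹ • u := by
  rw [norm_smul, hu, mul_one, Real.norm_eq_abs, sq_abs, smul_smul]
  congr 1
  rcases eq_or_ne t 0 with rfl | ht
  · simp
  · field_simp

theorem stmt3_general {ι : Type*} [Fintype ι] [Nonempty ι] {d : ℕ} (hd : Odd d)
    (P Q : MvPolynomial ι ℝ)
    (hrel : ∀ x : EuclideanSpace ℝ ι, x ≠ 0 →
      MvPolynomial.eval (fun i => x i) Q =
        ‖x‖ ^ d * MvPolynomial.eval (fun i => ((‖x‖ ^ 2)⁻¹ • x) i) P) :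
    P = 0 ∧ Q = 0 := by
  have hline (u : EuclideanSpace ℝ ι) (hu : ‖u‖ = 1) :
      lineRestriction u P = 0 ∧ lineRestriction u Q = 0 := by
    refine eq_zero_of_eval_eq_abs_pow_mul_eval_inv hd fun t ht ↦ ?_
    have hu0 : u ≠ 0 := norm_ne_zero_iff.mp (hu ▸ one_ne_zero)
    have htu := hrel (t • u) (smul_ne_zero ht hu0)
    rw [inv_norm_sq_smul_smul_of_norm_eq_one hu, norm_smul, hu, mul_one, Real.norm_eq_abs] at htu
    rwa [eval_lineRestriction, eval_lineRestriction]
  exact ⟨eq_zero_of_lineRestriction_eq_zero fun u hu ↦ (hline u hu).1,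
    eq_zero_of_lineRestriction_eq_zero fun u hu ↦ (hline u hu).2⟩

/-- If `P, Q` are real polynomial functions on `ℝⁿ` of total degree at most `2m−n`
(with `2m−n` a positive odd integer) and `Q(x) = |x|^{2m−n} P(x/|x|²)` for every
nonzero `x ∈ ℝⁿ`, then `P ≡ 0` and `Q ≡ 0`. -/
theorem stmt3 (n m : ℕ) (hn : 3 ≤ n) (hodd : Odd n) (hmn : n < 2 * m)
    (P Q : MvPolynomial (Fin n) ℝ)
    (hP : P.totalDegree ≤ 2 * m - n) (hQ : Q.totalDegree ≤ 2 * m - n)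
    (hrel : ∀ x : EuclideanSpace ℝ (Fin n), x ≠ 0 →
      MvPolynomial.eval (fun i => x i) Q =
        ‖x‖ ^ (2 * m - n) * MvPolynomial.eval (fun i => ((‖x‖ ^ 2)⁻¹ • x) i) P) :
    P = 0 ∧ Q = 0 := by
  have : Nonempty (Fin n) := ⟨⟨0, by lia⟩⟩
  exact stmt3_general (Nat.Even.sub_odd hmn.le (even_two_mul m) hodd) P Q hrel
end

section
/- Let ε ∈ [0,1), let α ∈ (0, (2m+n)/(2m−n)] with α ≠ 1, and let γ > 0. Let u be a positive smooth function on ℝⁿ such that for some c > 0 one has c^{−1}(1+|x|²)^{(2m−n)/2} ≤ u(x) ≤ c(1+|x|²)^{(2m−n)/2} for all x, and u(x) = γ ∫_{ℝⁿ} |x−y|^{2m−n} F_{ε,u}(y) dy for all x. Then, with c_α := α(2m−n)/2 − (2m+n)/2, both of the following integrals converge absolutely and ε m (1−α) ∫_{ℝⁿ} f(x)^{2m} u(x)² (1−|x|²)/(1+|x|²) dx = c_α ∫_{ℝⁿ} f(x)^{−c_α} u(x)^{1−α} (1−|x|²)/(1+|x|²) dx. -/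
open MeasureTheory

/-- The constant `c_α := α(2m−n)/2 − (2m+n)/2`. -/
noncomputable def cAlpha (n m : ℕ) (α : ℝ) : ℝ :=
  α * (2 * (m : ℝ) - n) / 2 - (2 * (m : ℝ) + n) / 2

/-- The nonlinearity `F_{ε,u}(x) := ε f(x)^{2m} u(x) +
f(x)^{(n+2m)/2 + α(n−2m)/2} u(x)^{−α}` with `f(x) = 2/(1+|x|²)`. -/
noncomputable def sphF (n m : ℕ) (ε α : ℝ) (u : EuclideanSpace ℝ (Fin n) → ℝ)
    (x : EuclideanSpace ℝ (Fin n)) : ℝ :=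
  ε * (2 / (1 + ‖x‖ ^ 2)) ^ (2 * m) * u x +
    (2 / (1 + ‖x‖ ^ 2)) ^ (((n : ℝ) + 2 * m) / 2 + α * ((n : ℝ) - 2 * m) / 2) * u x ^ (-α)

open Set
open Module (finrank)

/-!
Under stereographic projection the equation becomes an equation on the sphere for
`v = u / ⟨x⟩ ^ (2m - n)`, where `⟨x⟩ = √(1 + |x|²)`, and the identity is its Kazdan-Warner identity
for the height function `h = (1 - |x|²) / (1 + |x|²)`, the generator of the dilations of `ℝⁿ`.
Write `p = 2m - n` and `u = ∫ |x - y| ^ p F(y) dy` with `F = ⟨x⟩ ^ (-2n - p) G'(v)`. The kernel is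
homogeneous of degree `p` and symmetric, so moving a dilation from one variable to the other gives
`∫ F (x · ∇u) = p / 2 * ∫ F u`. On the other hand
`x · ∇(⟨x⟩⁻²ⁿ G(v)) = ⟨x⟩⁻²ⁿ (h - 1) (n G(v) + p / 2 * v G'(v)) + F (x · ∇u)`,
and the left-hand side has the integral `-n ∫ ⟨x⟩⁻²ⁿ G(v)`. Adding up, everything cancels but
`∫ ⟨x⟩⁻²ⁿ h (n G(v) + p / 2 * v G'(v)) = 0`.
-/

section Bracket

variable {E : Type*} [SeminormedAddCommGroup E]

/-- The Japanese bracket `⟨x⟩`, the weight in which growth and decay at infinity are measured. The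
conformal factor of stereographic projection is `2 / ⟨x⟩²`. -/
noncomputable def bracket (x : E) : ℝ := √(1 + ‖x‖ ^ 2)

lemma sq_bracket (x : E) : bracket x ^ 2 = 1 + ‖x‖ ^ 2 := Real.sq_sqrt (by positivity)

lemma one_le_bracket (x : E) : 1 ≤ bracket x :=
  Real.one_le_sqrt.2 (le_add_of_nonneg_right (by positivity))

lemma bracket_pos (x : E) : 0 < bracket x := one_pos.trans_le (one_le_bracket x)

lemma norm_le_bracket (x : E) : ‖x‖ ≤ bracket x := Real.le_sqrt_of_sq_le (by simp)

@[fun_prop]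
lemma continuous_bracket : Continuous (bracket : E → ℝ) := by
  unfold bracket
  fun_prop

lemma bracket_rpow (x : E) (k : ℕ) : (1 + ‖x‖ ^ 2) ^ ((k : ℝ) / 2) = bracket x ^ k := by
  rw [← sq_bracket, ← Real.rpow_natCast_mul (bracket_pos x).le, Nat.cast_ofNat,
    mul_div_cancel₀ _ two_ne_zero, Real.rpow_natCast]

lemma two_div_pow_mul_pow {r s k p : ℕ} (hk : 2 * r = k + p * s) (x : E) (a : ℝ) :
    (2 / (1 + ‖x‖ ^ 2)) ^ r * a ^ s = 2 ^ r * (bracket x ^ k)⁻¹ * (a / bracket x ^ p) ^ s := by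
  have hx := bracket_pos x
  rw [← sq_bracket, div_pow, div_pow, ← pow_mul, ← pow_mul, hk, pow_add]
  field_simp

lemma two_div_rpow_mul_rpow {r s : ℝ} {k p : ℕ} (hk : 2 * r = k + p * s) (x : E) {a : ℝ}
    (ha : 0 < a) :
    (2 / (1 + ‖x‖ ^ 2)) ^ r * a ^ s = 2 ^ r * (bracket x ^ k)⁻¹ * (a / bracket x ^ p) ^ s := by
  have hx := bracket_pos x
  rw [← sq_bracket, Real.div_rpow zero_le_two (by positivity), Real.div_rpow ha.le (by positivity),
    ← Real.rpow_natCast_mul hx.le, ← Real.rpow_natCast_mul hx.le, Nat.cast_ofNat, hk,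
    Real.rpow_add hx, Real.rpow_natCast]
  have hps : bracket x ^ (p * s) ≠ 0 := (Real.rpow_pos_of_pos hx _).ne'
  field_simp

lemma norm_sub_le_bracket_mul (x y : E) : ‖x - y‖ ≤ bracket x * bracket y := by
  refine (norm_sub_le x y).trans ?_
  rw [← Real.sqrt_sq (by positivity : 0 ≤ ‖x‖ + ‖y‖), bracket, bracket,
    ← Real.sqrt_mul (by positivity)]
  exact Real.sqrt_le_sqrt (by nlinarith [sq_nonneg (‖x‖ * ‖y‖ - 1)])

lemma abs_norm_sub_pow_sub_le (p : ℕ) (x z y : E) :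
    |‖x - y‖ ^ p - ‖z - y‖ ^ p| ≤
      p * max (bracket x) (bracket z) ^ (p - 1) * ‖x - z‖ * bracket y ^ p := by
  have hy := one_le_bracket y
  have hx0 := bracket_pos x
  have hnorm : |‖x - y‖ - ‖z - y‖| ≤ ‖x - z‖ := by
    simpa using abs_norm_sub_norm_le (x - y) (z - y)
  have hmax : max |‖x - y‖| |‖z - y‖| ≤ max (bracket x) (bracket z) * bracket y := by
    rw [abs_norm, abs_norm, max_mul_of_nonneg _ _ (bracket_pos y).le]
    exact max_le_max (norm_sub_le_bracket_mul x y) (norm_sub_le_bracket_mul z y)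
  calc |‖x - y‖ ^ p - ‖z - y‖ ^ p|
      ≤ |‖x - y‖ - ‖z - y‖| * p * max |‖x - y‖| |‖z - y‖| ^ (p - 1) := abs_pow_sub_pow_le ..
    _ ≤ ‖x - z‖ * p * (max (bracket x) (bracket z) * bracket y) ^ (p - 1) := by gcongr
    _ = p * max (bracket x) (bracket z) ^ (p - 1) * ‖x - z‖ * bracket y ^ (p - 1) := by ring
    _ ≤ _ := by
      gcongr
      exact Nat.sub_le p 1

lemma bracket_smul_le [NormedSpace ℝ E] {t c : ℝ} (hc : 1 ≤ c) (ht : |t| ≤ c) (x : E) :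
    bracket (t • x) ≤ c * bracket x := by
  refine Real.sqrt_le_iff.2 ⟨mul_nonneg (by positivity) (bracket_pos x).le, ?_⟩
  rw [mul_pow, sq_bracket, norm_smul, mul_pow, Real.norm_eq_abs, mul_add, mul_one]
  gcongr
  exact one_le_pow₀ hc

/-- The coordinate along the polar axis of the inverse stereographic projection of `x`, with the
origin sent to the pole of height `1`. -/
noncomputable def stereoHeight (x : E) : ℝ := (1 - ‖x‖ ^ 2) / (1 + ‖x‖ ^ 2)

@[fun_prop]
lemma continuous_stereoHeight : Continuous (stereoHeight : E → ℝ) :=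
  Continuous.div (by fun_prop) (by fun_prop) fun x => by positivity

lemma abs_stereoHeight_le_one (x : E) : |stereoHeight x| ≤ 1 := by
  have hpos : 0 < 1 + ‖x‖ ^ 2 := by positivity
  rw [stereoHeight, abs_div, abs_of_pos hpos, div_le_one hpos, abs_le]
  constructor <;> linarith [sq_nonneg ‖x‖]

end Bracket

section EulerDerivative

variable {E : Type*} [NormedAddCommGroup E] [NormedSpace ℝ E] {φ D : E → ℝ}

/-- `D` is the Euler derivative `x · ∇φ` of `φ`, encoded as the derivative of `φ` along dilations,
so that no differentiability in other directions is asked for. -/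
def HasEulerDeriv (φ D : E → ℝ) : Prop :=
  ∀ x, HasDerivAt (fun t : ℝ => φ (t • x)) (D x) 1

lemma HasEulerDeriv.of_differentiable (hφ : Differentiable ℝ φ) :
    HasEulerDeriv φ fun x => fderiv ℝ φ x x := fun x => by
  have hline : HasDerivAt (fun t : ℝ => t • x) x 1 := by
    simpa using (hasDerivAt_id (1 : ℝ)).smul_const x
  exact (hφ x).hasFDerivAt.comp_hasDerivAt_of_eq 1 hline (one_smul ℝ x).symm

lemma HasEulerDeriv.hasDerivAt_smul (h : HasEulerDeriv φ D) (x : E) {t : ℝ} (ht : t ≠ 0) :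
    HasDerivAt (fun s : ℝ => φ (s • x)) (D (t • x) * t⁻¹) t := by
  have hscale : HasDerivAt (fun s : ℝ => s * t⁻¹) t⁻¹ t := by
    simpa using (hasDerivAt_id t).mul_const t⁻¹
  refine ((h (t • x)).comp_of_eq t hscale (mul_inv_cancel₀ ht).symm).congr_of_eventuallyEq ?_
  exact .of_forall fun s => by simp [smul_smul, ht]

lemma HasEulerDeriv.measurable [MeasurableSpace E] [OpensMeasurableSpace E]
    (h : HasEulerDeriv φ D) (hφ : Continuous φ) : Measurable D := by
  have hD : D = fun x => deriv (fun t : ℝ => φ (t • x)) 1 := funext fun x => (h x).deriv.symm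
  have hcont : Continuous (Function.uncurry fun (x : E) (t : ℝ) => φ (t • x)) := by
    unfold Function.uncurry
    fun_prop
  rw [hD]
  exact (measurable_deriv_with_param hcont).comp (measurable_id.prodMk measurable_const)

lemma hasEulerDeriv_bracket :
    HasEulerDeriv (bracket : E → ℝ) fun x => bracket x * (1 - stereoHeight x) / 2 := fun x => by
  have hpos : 1 + ‖x‖ ^ 2 ≠ 0 := by positivity
  have hinner : HasDerivAt (fun t : ℝ => 1 + t ^ 2 * ‖x‖ ^ 2) (2 * ‖x‖ ^ 2) 1 := by
    simpa using ((hasDerivAt_pow 2 (1 : ℝ)).mul_const (‖x‖ ^ 2)).const_add 1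
  have hsqrt := hinner.sqrt (by simpa using hpos)
  simp only [one_pow, one_mul] at hsqrt
  refine (hsqrt.congr_deriv ?_).congr_of_eventuallyEq (.of_forall fun t => ?_)
  · have hb := bracket_pos x
    rw [show √(1 + ‖x‖ ^ 2) = bracket x from rfl]
    simp only [stereoHeight]
    field_simp
    rw [sq_bracket]
    ring
  · simp [bracket, norm_smul, mul_pow]

lemma hasEulerDeriv_bracket_pow (k : ℕ) :
    HasEulerDeriv (fun x : E => bracket x ^ k) fun x =>
      k / 2 * (1 - stereoHeight x) * bracket x ^ k := fun x => by
  refine ((hasEulerDeriv_bracket x).fun_pow k).congr_deriv ?_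
  rw [one_smul]
  cases k with
  | zero => simp
  | succ k =>
    rw [Nat.add_sub_cancel]
    ring

lemma HasEulerDeriv.bracket_pow_inv_mul_comp {u : E → ℝ} {g G : ℝ → ℝ} {p : ℕ} (n : ℕ)
    (hu : HasEulerDeriv u D)
    (hG : ∀ x, HasDerivAt G (g (u x / bracket x ^ p)) (u x / bracket x ^ p)) :
    HasEulerDeriv (fun x => (bracket x ^ (2 * n))⁻¹ * G (u x / bracket x ^ p)) fun x =>
      (bracket x ^ (2 * n))⁻¹ * ((stereoHeight x - 1) *
        (n * G (u x / bracket x ^ p) +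
          p / 2 * (u x / bracket x ^ p) * g (u x / bracket x ^ p)) +
        g (u x / bracket x ^ p) * (D x / bracket x ^ p)) := fun x => by
  have hb := bracket_pos x
  have hweight := (hasEulerDeriv_bracket_pow (2 * n) x).fun_inv (by simpa using (pow_pos hb _).ne')
  have hv := (hu x).fun_div (hasEulerDeriv_bracket_pow p x) (by simpa using (pow_pos hb _).ne')
  have hGv := (hG x).comp_of_eq 1 hv (by simp only [one_smul])
  refine (hweight.fun_mul hGv).congr_deriv ?_
  simp only [one_smul, Function.comp_apply]
  push_cast
  field_simp
  ring

end EulerDerivative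

section Integrals

variable {E : Type*} [NormedAddCommGroup E] [NormedSpace ℝ E] [MeasurableSpace E] [BorelSpace E]
  {μ : Measure E}

lemma HasEulerDeriv.hasDerivAt_integral_mul_comp_smul {φ D W B : E → ℝ}
    (h : HasEulerDeriv φ D) (hφ : Continuous φ) (hW : AEStronglyMeasurable W μ)
    (hWφ : Integrable (fun x => W x * φ x) μ) (hB : Integrable B μ)
    (hWD : ∀ x, ∀ t ∈ Ioo (1 / 2 : ℝ) 2, |W x * D (t • x)| ≤ B x) :
    HasDerivAt (fun t : ℝ => ∫ x, W x * φ (t • x) ∂μ) (∫ x, W x * D x ∂μ) 1 := by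
  have hD := h.measurable hφ
  have hderiv := (hasDerivAt_integral_of_dominated_loc_of_deriv_le (μ := μ) (x₀ := (1 : ℝ))
    (F := fun t x => W x * φ (t • x)) (F' := fun t x => W x * (D (t • x) * t⁻¹))
    (s := Ioo (1 / 2) 2) (bound := fun x => 2 * B x)
    (Ioo_mem_nhds (by norm_num) (by norm_num))
    (.of_forall fun t => hW.mul (by fun_prop : Continuous fun x => φ (t • x)).aestronglyMeasurable)
    (by simpa using hWφ) (hW.mul (by simpa using hD.aestronglyMeasurable))
    (.of_forall fun x t ht => ?_) (hB.const_mul 2)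
    (.of_forall fun x t ht => (h.hasDerivAt_smul x (by linarith [ht.1])).const_mul (W x))).2
  · simpa using hderiv
  · have ht0 : 0 < t := by linarith [ht.1]
    have hinv : t⁻¹ ≤ 2 := inv_le_of_inv_le₀ two_pos (by linarith [ht.1])
    rw [← mul_assoc, norm_mul, Real.norm_eq_abs, Real.norm_of_nonneg (inv_pos.2 ht0).le, mul_comm]
    exact mul_le_mul hinv (hWD x t ht) (abs_nonneg _) zero_le_two

variable [FiniteDimensional ℝ E] [μ.IsAddHaarMeasure]

lemma integrable_bracket_pow_inv {k : ℕ} (hk : finrank ℝ E < k) :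
    Integrable (fun x : E => (bracket x ^ k)⁻¹) μ := by
  refine (integrable_rpow_neg_one_add_norm_sq (μ := μ) (Nat.cast_lt.2 hk)).congr ?_
  exact .of_forall fun x => by
    simp only [neg_div, Real.rpow_neg (by positivity : 0 ≤ 1 + ‖x‖ ^ 2), bracket_rpow]

lemma integrable_bracket_pow_inv_mul {k : ℕ} (hk : finrank ℝ E < k) {w : E → ℝ}
    (hw : AEStronglyMeasurable w μ) {C : ℝ} (hC : ∀ x, |w x| ≤ C) :
    Integrable (fun x => (bracket x ^ k)⁻¹ * w x) μ :=
  (integrable_bracket_pow_inv hk).mul_bdd hw (.of_forall hC)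

-- Differentiate `∫ φ(t • x) dx = t⁻ⁿ ∫ φ` at `t = 1`.
lemma HasEulerDeriv.integral_eq {φ D : E → ℝ} (h : HasEulerDeriv φ D) (hφ : Continuous φ)
    (hφi : Integrable φ μ) {k : ℕ} (hk : finrank ℝ E < k) {C : ℝ}
    (hD : ∀ x, |D x| ≤ C * (bracket x ^ k)⁻¹) :
    ∫ x, D x ∂μ = -finrank ℝ E * ∫ x, φ x ∂μ := by
  have hC : 0 ≤ C :=
    nonneg_of_mul_nonneg_left ((abs_nonneg _).trans (hD 0)) (inv_pos.2 (pow_pos (bracket_pos 0) k))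
  have hbound : ∀ x, ∀ t ∈ Ioo (1 / 2 : ℝ) 2,
      |1 * D (t • x)| ≤ C * 2 ^ k * (bracket x ^ k)⁻¹ := by
    intro x t ht
    have ht0 : 0 < t := by linarith [ht.1]
    have hx : bracket x ≤ 2 * bracket (t • x) := by
      have hinv : |t⁻¹| ≤ 2 := by
        rw [abs_of_pos (inv_pos.2 ht0)]
        exact inv_le_of_inv_le₀ two_pos (by linarith [ht.1])
      simpa [smul_smul, ht0.ne'] using bracket_smul_le one_le_two hinv (t • x)
    have hx0 := bracket_pos x
    have htx0 := bracket_pos (t • x)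
    rw [one_mul]
    calc |D (t • x)| ≤ C * (bracket (t • x) ^ k)⁻¹ := hD _
      _ = C * 2 ^ k * ((2 * bracket (t • x)) ^ k)⁻¹ := by rw [mul_pow]; field_simp
      _ ≤ C * 2 ^ k * (bracket x ^ k)⁻¹ := by gcongr
  have hleft := h.hasDerivAt_integral_mul_comp_smul (μ := μ) (W := fun _ => 1) hφ
    aestronglyMeasurable_const (by simpa using hφi)
    ((integrable_bracket_pow_inv hk).const_mul (C * 2 ^ k)) hbound
  have hright : HasDerivAt (fun t : ℝ => (t ^ finrank ℝ E)⁻¹ * ∫ x, φ x ∂μ)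
      (-finrank ℝ E * ∫ x, φ x ∂μ) 1 := by
    simpa using ((hasDerivAt_pow (finrank ℝ E) (1 : ℝ)).fun_inv (by simp)).mul_const (∫ x, φ x ∂μ)
  simp only [one_mul] at hleft
  refine hleft.unique (hright.congr_of_eventuallyEq ?_)
  filter_upwards [Ioi_mem_nhds one_pos] with t ht
  rw [Measure.integral_comp_smul_of_nonneg μ φ t (hR := ht.out.le), smul_eq_mul]

end Integrals

section RieszPotential

variable {E : Type*} [NormedAddCommGroup E] [MeasurableSpace E] {μ : Measure E} {p : ℕ}
  {F H D : E → ℝ}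

/-- The potential `∫ ‖x - y‖ ^ p F(y) dy`, a Riesz potential of order `n + p` above the dimension
`n`, without its normalizing constant. -/
noncomputable def rieszPotential (μ : Measure E) (p : ℕ) (F : E → ℝ) (x : E) : ℝ :=
  ∫ y, ‖x - y‖ ^ p * F y ∂μ

lemma abs_rieszPotential_le (hFp : Integrable (fun y => bracket y ^ p * |F y|) μ) (x : E) :
    |rieszPotential μ p F x| ≤ (∫ y, bracket y ^ p * |F y| ∂μ) * bracket x ^ p := by
  rw [← Real.norm_eq_abs, mul_comm, ← integral_const_mul]
  refine norm_integral_le_of_norm_le (hFp.const_mul _) (.of_forall fun y => ?_)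
  rw [norm_mul, norm_pow, norm_norm, Real.norm_eq_abs, ← mul_assoc, ← mul_pow]
  gcongr
  exact norm_sub_le_bracket_mul x y

variable [BorelSpace E]

lemma integrable_norm_sub_pow_mul (hF : AEStronglyMeasurable F μ)
    (hFp : Integrable (fun y => bracket y ^ p * |F y|) μ) (x : E) :
    Integrable (fun y => ‖x - y‖ ^ p * F y) μ := by
  refine (hFp.const_mul (bracket x ^ p)).mono'
    ((by fun_prop : Continuous fun y => ‖x - y‖ ^ p).aestronglyMeasurable.mul hF)
    (.of_forall fun y => ?_)
  rw [norm_mul, norm_pow, norm_norm, Real.norm_eq_abs, ← mul_assoc, ← mul_pow]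
  gcongr
  exact norm_sub_le_bracket_mul x y

lemma abs_rieszPotential_sub_le (hF : AEStronglyMeasurable F μ)
    (hFp : Integrable (fun y => bracket y ^ p * |F y|) μ) (x z : E) :
    |rieszPotential μ p F x - rieszPotential μ p F z| ≤
      p * max (bracket x) (bracket z) ^ (p - 1) * ‖x - z‖ * ∫ y, bracket y ^ p * |F y| ∂μ := by
  rw [← Real.norm_eq_abs, rieszPotential, rieszPotential,
    ← integral_sub (integrable_norm_sub_pow_mul hF hFp x) (integrable_norm_sub_pow_mul hF hFp z),
    ← integral_const_mul]
  refine norm_integral_le_of_norm_le (hFp.const_mul _) (.of_forall fun y => ?_)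
  rw [← sub_mul, norm_mul, Real.norm_eq_abs, Real.norm_eq_abs, ← mul_assoc]
  gcongr
  exact abs_norm_sub_pow_sub_le p x z y

lemma continuous_rieszPotential (hF : AEStronglyMeasurable F μ)
    (hFp : Integrable (fun y => bracket y ^ p * |F y|) μ) : Continuous (rieszPotential μ p F) := by
  refine continuous_iff_continuousAt.2 fun z => tendsto_iff_dist_tendsto_zero.2 ?_
  refine squeeze_zero (fun _ => dist_nonneg) (fun x => abs_rieszPotential_sub_le hF hFp x z) ?_
  refine Continuous.tendsto' (by fun_prop) z 0 (by simp)

variable [NormedSpace ℝ E]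

lemma HasEulerDeriv.abs_le_of_rieszPotential (h : HasEulerDeriv (rieszPotential μ p F) D)
    (hp : p ≠ 0) (hF : AEStronglyMeasurable F μ)
    (hFp : Integrable (fun y => bracket y ^ p * |F y|) μ) (x : E) :
    |D x| ≤ p * 2 ^ (p - 1) * (∫ y, bracket y ^ p * |F y| ∂μ) * bracket x ^ p := by
  have hx0 := bracket_pos x
  set M := ∫ y, bracket y ^ p * |F y| ∂μ
  have hM : 0 ≤ M := integral_nonneg fun y => by have := bracket_pos y; positivity
  refine (h x).le_of_lip' (by positivity) ?_
  filter_upwards [Ioo_mem_nhds (by norm_num : (-2 : ℝ) < 1) one_lt_two] with t ht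
  have hmax : max (bracket (t • x)) (bracket x) ≤ 2 * bracket x :=
    max_le (bracket_smul_le one_le_two (abs_le.2 ⟨ht.1.le, ht.2.le⟩) x) (by linarith)
  have hdist : ‖t • x - x‖ ≤ |t - 1| * bracket x := by
    rw [show t • x - x = (t - 1) • x by rw [sub_smul, one_smul], norm_smul, Real.norm_eq_abs]
    gcongr
    exact norm_le_bracket x
  rw [one_smul, Real.norm_eq_abs, Real.norm_eq_abs]
  calc |rieszPotential μ p F (t • x) - rieszPotential μ p F x|
      ≤ p * max (bracket (t • x)) (bracket x) ^ (p - 1) * ‖t • x - x‖ * M :=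
        abs_rieszPotential_sub_le hF hFp _ _
    _ ≤ p * (2 * bracket x) ^ (p - 1) * (|t - 1| * bracket x) * M := by gcongr
    _ = p * 2 ^ (p - 1) * M * (bracket x ^ (p - 1) * bracket x) * |t - 1| := by ring
    _ = p * 2 ^ (p - 1) * M * bracket x ^ p * |t - 1| := by rw [pow_sub_one_mul hp]

variable [FiniteDimensional ℝ E] [μ.IsAddHaarMeasure]

-- `‖t • x - y‖ = t ‖t⁻¹ • y - x‖`, so exchanging the two integrations moves the dilation.
lemma integral_mul_rieszPotential_smul (hF : AEStronglyMeasurable F μ)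
    (hFp : Integrable (fun y => bracket y ^ p * |F y|) μ) (hH : AEStronglyMeasurable H μ)
    (hHp : Integrable (fun y => bracket y ^ p * |H y|) μ) {t : ℝ} (ht : 0 < t) :
    ∫ x, F x * rieszPotential μ p H (t • x) ∂μ =
      t ^ p * ∫ y, H y * rieszPotential μ p F (t⁻¹ • y) ∂μ := by
  have hkernel : ∀ x y : E, ‖t • x - y‖ = t * ‖t⁻¹ • y - x‖ := fun x y => by
    rw [norm_sub_rev, ← norm_smul_of_nonneg ht.le, smul_sub, smul_inv_smul₀ ht.ne']
  have hbound : ∀ x y : E, ‖t • x - y‖ ≤ max 1 |t| * bracket x * bracket y := fun x y =>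
    (norm_sub_le_bracket_mul _ y).trans <| by
      have := bracket_pos y
      gcongr
      exact bracket_smul_le (le_max_left _ _) (le_max_right _ _) x
  have hint : Integrable
      (Function.uncurry fun x y => F x * (‖t • x - y‖ ^ p * H y)) (μ.prod μ) := by
    refine ((hFp.mul_prod hHp).const_mul (max 1 |t| ^ p)).mono'
      (hF.comp_fst.mul ((by fun_prop : Continuous fun z : E × E =>
        ‖t • z.1 - z.2‖ ^ p).aestronglyMeasurable.mul hH.comp_snd)) (.of_forall fun z => ?_)
    rw [Function.uncurry, norm_mul, norm_mul, norm_pow, norm_norm, Real.norm_eq_abs,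
      Real.norm_eq_abs]
    calc |F z.1| * (‖t • z.1 - z.2‖ ^ p * |H z.2|)
        ≤ |F z.1| * ((max 1 |t| * bracket z.1 * bracket z.2) ^ p * |H z.2|) := by
          gcongr
          exact hbound _ _
      _ = _ := by ring
  simp only [rieszPotential, ← integral_const_mul]
  rw [integral_integral_swap hint]
  congr! 4 with _ x
  rw [hkernel]
  ring

lemma HasEulerDeriv.integral_mul_rieszPotential (h : HasEulerDeriv (rieszPotential μ p F) D)
    (hp : p ≠ 0) (hF : AEStronglyMeasurable F μ)
    (hFp : Integrable (fun y => bracket y ^ p * |F y|) μ) :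
    ∫ x, F x * D x ∂μ = p / 2 * ∫ x, F x * rieszPotential μ p F x ∂μ := by
  set M := ∫ y, bracket y ^ p * |F y| ∂μ
  have hM : 0 ≤ M := integral_nonneg fun y => by have := bracket_pos y; positivity
  have hcont := continuous_rieszPotential hF hFp
  have hFI : Integrable (fun x => F x * rieszPotential μ p F x) μ := by
    refine (hFp.const_mul M).mono' (hF.mul hcont.aestronglyMeasurable) (.of_forall fun x => ?_)
    rw [norm_mul, Real.norm_eq_abs, mul_comm, ← mul_assoc]
    exact mul_le_mul_of_nonneg_right (abs_rieszPotential_le hFp x) (abs_nonneg _)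
  have hbound : ∀ x, ∀ t ∈ Ioo (1 / 2 : ℝ) 2, |F x * D (t • x)| ≤
      p * 2 ^ (p - 1) * M * 2 ^ p * (bracket x ^ p * |F x|) := by
    intro x t ht
    have hx := bracket_pos (t • x)
    have htx : bracket (t • x) ≤ 2 * bracket x :=
      bracket_smul_le one_le_two (abs_le.2 ⟨by linarith [ht.1], ht.2.le⟩) x
    calc |F x * D (t • x)| = |F x| * |D (t • x)| := abs_mul _ _
      _ ≤ |F x| * (p * 2 ^ (p - 1) * M * (2 * bracket x) ^ p) := by
        gcongr
        exact (h.abs_le_of_rieszPotential hp hF hFp _).trans (by gcongr)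
      _ = _ := by ring
  have hG := h.hasDerivAt_integral_mul_comp_smul hcont hF hFI (hFp.const_mul _) hbound
  have hG_inv : HasDerivAt (fun t : ℝ => t ^ p * ∫ x, F x * rieszPotential μ p F (t⁻¹ • x) ∂μ)
      (p * (∫ x, F x * rieszPotential μ p F x ∂μ) - ∫ x, F x * D x ∂μ) 1 := by
    have hcomp := hG.comp_of_eq 1 (hasDerivAt_inv (one_ne_zero (α := ℝ))) inv_one.symm
    refine ((hasDerivAt_pow p (1 : ℝ)).fun_mul hcomp).congr_deriv ?_
    simp [sub_eq_add_neg]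
  have hsymm := hG.unique (hG_inv.congr_of_eventuallyEq (by
    filter_upwards [Ioi_mem_nhds one_pos] with t ht
    exact integral_mul_rieszPotential_smul hF hFp hF hFp ht))
  linarith

end RieszPotential

section KazdanWarner

variable {E : Type*} [NormedAddCommGroup E] [NormedSpace ℝ E] [FiniteDimensional ℝ E]
  [MeasurableSpace E] [BorelSpace E] {μ : Measure E} [μ.IsAddHaarMeasure]
  {p : ℕ} {u v D : E → ℝ} {g G : ℝ → ℝ} {K : Set ℝ}

lemma integrable_bracket_pow_inv_mul_comp {k : ℕ} (hk : finrank ℝ E < k) (hK : IsCompact K)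
    (hg : ContinuousOn g K) (hv : Continuous v) (hvK : ∀ x, v x ∈ K) {w : E → ℝ}
    (hw : AEStronglyMeasurable w μ) {C : ℝ} (hC : ∀ x, |w x| ≤ C) :
    Integrable (fun x => (bracket x ^ k)⁻¹ * (w x * g (v x))) μ := by
  obtain ⟨B, hB⟩ := hK.exists_bound_of_continuousOn hg
  refine integrable_bracket_pow_inv_mul (C := C * B) hk
    (hw.mul (hg.comp_continuous hv hvK).aestronglyMeasurable) fun x => ?_
  rw [abs_mul]
  exact mul_le_mul (hC x) (hB _ (hvK x)) (abs_nonneg _) ((abs_nonneg _).trans (hC x))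

lemma integrable_bracket_pow_mul_abs_inv_mul_comp {k : ℕ} (hk : finrank ℝ E < k)
    (hK : IsCompact K) (hg : ContinuousOn g K) (hv : Continuous v) (hvK : ∀ x, v x ∈ K) :
    Integrable (fun x => bracket x ^ p * |(bracket x ^ (k + p))⁻¹ * g (v x)|) μ := by
  refine (integrable_bracket_pow_inv_mul_comp hk hK hg hv hvK (w := fun _ => 1)
    aestronglyMeasurable_const (C := 1) (by simp)).norm.congr (.of_forall fun x => ?_)
  have hk0 := pow_pos (bracket_pos x) k
  have hp0 := pow_pos (bracket_pos x) p
  simp only [one_mul, norm_mul, abs_mul, norm_inv, abs_inv, Real.norm_eq_abs, pow_add,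
    abs_of_pos hk0, abs_of_pos hp0]
  field_simp

lemma HasEulerDeriv.integral_bracket_pow_inv_mul_comp (hn : 0 < finrank ℝ E)
    (hu : HasEulerDeriv u D) (hv : Continuous fun x => u x / bracket x ^ p) {L : ℝ}
    (hD : ∀ x, |D x / bracket x ^ p| ≤ L)
    (hK : IsCompact K) (hg : ContinuousOn g K) (hG : ∀ s ∈ K, HasDerivAt G (g s) s)
    (hvK : ∀ x, u x / bracket x ^ p ∈ K) :
    ∫ x, (bracket x ^ (2 * finrank ℝ E))⁻¹ * ((stereoHeight x - 1) *
        (finrank ℝ E * G (u x / bracket x ^ p) +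
          p / 2 * (u x / bracket x ^ p) * g (u x / bracket x ^ p)) +
        g (u x / bracket x ^ p) * (D x / bracket x ^ p)) ∂μ =
      -finrank ℝ E * ∫ x, (bracket x ^ (2 * finrank ℝ E))⁻¹ * G (u x / bracket x ^ p) ∂μ := by
  have h2n : finrank ℝ E < 2 * finrank ℝ E := by omega
  have hGK : ContinuousOn G K := fun s hs => (hG s hs).continuousAt.continuousWithinAt
  obtain ⟨A, hA⟩ := hK.exists_bound_of_continuousOn
    (by fun_prop : ContinuousOn (fun s => finrank ℝ E * G s + p / 2 * s * g s) K)
  obtain ⟨B, hB⟩ := hK.exists_bound_of_continuousOn hg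
  have hint : Integrable
      (fun x => (bracket x ^ (2 * finrank ℝ E))⁻¹ * G (u x / bracket x ^ p)) μ := by
    simpa using integrable_bracket_pow_inv_mul_comp h2n hK hGK hv hvK
      (w := fun _ => 1) aestronglyMeasurable_const (C := 1) (by simp)
  have hweight : Continuous fun x : E => (bracket x ^ (2 * finrank ℝ E))⁻¹ :=
    (by fun_prop : Continuous fun x : E => bracket x ^ (2 * finrank ℝ E)).inv₀
      fun x => (pow_pos (bracket_pos x) _).ne'
  refine (hu.bracket_pow_inv_mul_comp (finrank ℝ E) fun x => hG _ (hvK x)).integral_eq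
    (hweight.mul (hGK.comp_continuous hv hvK)) hint h2n (C := 2 * A + B * L) fun x => ?_
  have hb : 0 < (bracket x ^ (2 * finrank ℝ E))⁻¹ := inv_pos.2 (pow_pos (bracket_pos x) _)
  have hheight : |stereoHeight x - 1| ≤ 2 := by
    rw [abs_le]
    constructor <;> linarith [abs_le.1 (abs_stereoHeight_le_one x)]
  rw [abs_mul, abs_of_pos hb, mul_comm]
  gcongr
  refine (abs_add_le _ _).trans (add_le_add ?_ ?_) <;> rw [abs_mul]
  · exact mul_le_mul hheight (hA _ (hvK x)) (abs_nonneg _) zero_le_two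
  · exact mul_le_mul (hB _ (hvK x)) (hD x) (abs_nonneg _) ((abs_nonneg _).trans (hB _ (hvK x)))

lemma HasEulerDeriv.integral_bracket_pow_inv_mul_stereoHeight (hn : 0 < finrank ℝ E)
    (hu : HasEulerDeriv u D) (huc : Continuous u) {L : ℝ} (hD : ∀ x, |D x / bracket x ^ p| ≤ L)
    (hK : IsCompact K) (hg : ContinuousOn g K) (hG : ∀ s ∈ K, HasDerivAt G (g s) s)
    (hvK : ∀ x, u x / bracket x ^ p ∈ K) :
    ∫ x, (bracket x ^ (2 * finrank ℝ E))⁻¹ * (stereoHeight x *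
        (finrank ℝ E * G (u x / bracket x ^ p) +
          p / 2 * (u x / bracket x ^ p) * g (u x / bracket x ^ p))) ∂μ =
      p / 2 * ∫ x, (bracket x ^ (2 * finrank ℝ E))⁻¹ *
          (u x / bracket x ^ p * g (u x / bracket x ^ p)) ∂μ -
        ∫ x, (bracket x ^ (2 * finrank ℝ E))⁻¹ *
          (D x / bracket x ^ p * g (u x / bracket x ^ p)) ∂μ := by
  have h2n : finrank ℝ E < 2 * finrank ℝ E := by omega
  have hGK : ContinuousOn G K := fun s hs => (hG s hs).continuousAt.continuousWithinAt
  have hv : Continuous fun x => u x / bracket x ^ p :=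
    huc.div (by fun_prop) fun x => (pow_pos (bracket_pos x) p).ne'
  have hDm : Measurable fun x => D x / bracket x ^ p :=
    (hu.measurable huc).div (by fun_prop : Continuous fun x : E => bracket x ^ p).measurable
  have hint {q : ℝ → ℝ} (hq : ContinuousOn q K) {w : E → ℝ} (hw : Measurable w) {C : ℝ}
      (hC : ∀ x, |w x| ≤ C) : Integrable
        (fun x => (bracket x ^ (2 * finrank ℝ E))⁻¹ * (w x * q (u x / bracket x ^ p))) μ :=
    integrable_bracket_pow_inv_mul_comp h2n hK hq hv hvK hw.aestronglyMeasurable hC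
  have hint_height := hint (q := fun s => finrank ℝ E * G s + p / 2 * s * g s) (by fun_prop)
    continuous_stereoHeight.measurable abs_stereoHeight_le_one
  have hint_D := hint hg hDm hD
  have hint_G := hint hGK (measurable_const (a := 1)) (C := 1) (by simp)
  have hint_g := hint (q := fun s => s * g s) (by fun_prop)
    (measurable_const (a := 1)) (C := 1) (by simp)
  simp only [one_mul] at hint_G hint_g
  have hdilate := hu.integral_bracket_pow_inv_mul_comp (μ := μ) hn hv hD hK hg hG hvK
  have hsplit := integral_add
    ((hint_height.sub (hint_G.const_mul (finrank ℝ E))).sub (hint_g.const_mul (p / 2))) hint_D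
  rw [integral_sub' (hint_height.sub (hint_G.const_mul _)) (hint_g.const_mul _),
    integral_sub' hint_height (hint_G.const_mul _), integral_const_mul, integral_const_mul]
    at hsplit
  have hcongr := hdilate.symm.trans ((integral_congr_ae (.of_forall fun x => ?_)).trans hsplit)
  · linarith
  · simp only [Pi.sub_apply]
    ring

/-- The Kazdan-Warner identity for the coordinate `stereoHeight` of the sphere, in stereographic
coordinates. -/
theorem integral_stereoHeight_mul_eq_zero_of_rieszPotential_eq (hn : 0 < finrank ℝ E) (hp : p ≠ 0)
    (hu : Differentiable ℝ u)
    (hK : IsCompact K) (hg : ContinuousOn g K) (hG : ∀ s ∈ K, HasDerivAt G (g s) s)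
    (hvK : ∀ x, u x / bracket x ^ p ∈ K)
    (hueq : rieszPotential μ p
      (fun y => (bracket y ^ (2 * finrank ℝ E + p))⁻¹ * g (u y / bracket y ^ p)) = u) :
    ∫ x, (bracket x ^ (2 * finrank ℝ E))⁻¹ * (stereoHeight x *
      (finrank ℝ E * G (u x / bracket x ^ p) +
        p / 2 * (u x / bracket x ^ p) * g (u x / bracket x ^ p))) ∂μ = 0 := by
  set F : E → ℝ := fun y => (bracket y ^ (2 * finrank ℝ E + p))⁻¹ * g (u y / bracket y ^ p)
  have hbp : ∀ x : E, 0 < bracket x ^ p := fun x => pow_pos (bracket_pos x) p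
  have hv : Continuous fun x => u x / bracket x ^ p :=
    hu.continuous.div (by fun_prop) fun x => (hbp x).ne'
  have hF : ∀ (w : E → ℝ) x, (bracket x ^ (2 * finrank ℝ E))⁻¹ *
      (w x / bracket x ^ p * g (u x / bracket x ^ p)) = F x * w x := fun w x => by
    simp only [F, pow_add]
    field_simp
  have hFm : AEStronglyMeasurable F μ :=
    (by fun_prop : Continuous fun y : E => bracket y ^ (2 * finrank ℝ E + p))
      |>.measurable.inv.aestronglyMeasurable.mul
        (hg.comp_continuous hv hvK).aestronglyMeasurable
  have hFp : Integrable (fun y => bracket y ^ p * |F y|) μ :=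
    integrable_bracket_pow_mul_abs_inv_mul_comp (by omega) hK hg hv hvK
  have hDu : HasEulerDeriv (rieszPotential μ p F) fun x => fderiv ℝ u x x := by
    rw [hueq]
    exact .of_differentiable hu
  have hD : ∀ x, |fderiv ℝ u x x / bracket x ^ p| ≤
      p * 2 ^ (p - 1) * ∫ y, bracket y ^ p * |F y| ∂μ := fun x => by
    rw [abs_div, abs_of_pos (hbp x), div_le_iff₀ (hbp x)]
    exact hDu.abs_le_of_rieszPotential hp hFm hFp x
  rw [HasEulerDeriv.integral_bracket_pow_inv_mul_stereoHeight hn (.of_differentiable hu)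
    hu.continuous hD hK hg hG hvK]
  simp only [hF]
  rw [hDu.integral_mul_rieszPotential hp hFm hFp, hueq, sub_self]

lemma integrable_stereoHeight_mul_rpow (hn : 0 < finrank ℝ E) (hu : Continuous u) {c : ℝ}
    (hc : 0 < c) (huK : ∀ x, u x / bracket x ^ p ∈ Icc c⁻¹ c) (r : ℝ) :
    Integrable (fun x => (bracket x ^ (2 * finrank ℝ E))⁻¹ *
      (stereoHeight x * (u x / bracket x ^ p) ^ r)) μ :=
  integrable_bracket_pow_inv_mul_comp (by omega) isCompact_Icc
    (continuousOn_id.rpow_const fun _ hs => .inl ((inv_pos.2 hc).trans_le hs.1).ne')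
    (hu.div (by fun_prop) fun x => (pow_pos (bracket_pos x) p).ne') huK
    continuous_stereoHeight.aestronglyMeasurable abs_stereoHeight_le_one

lemma integral_stereoHeight_mul_sq_add_rpow (hn : 0 < finrank ℝ E) (hp : p ≠ 0)
    (hu : Differentiable ℝ u) {A B α c : ℝ} (hα : α ≠ 1) (hc : 0 < c)
    (huK : ∀ x, u x / bracket x ^ p ∈ Icc c⁻¹ c)
    (hueq : rieszPotential μ p (fun y => (bracket y ^ (2 * finrank ℝ E + p))⁻¹ *
      (A * (u y / bracket y ^ p) + B * (u y / bracket y ^ p) ^ (-α))) = u) :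
    (finrank ℝ E + p) / 2 * (1 - α) * A *
        ∫ x, (bracket x ^ (2 * finrank ℝ E))⁻¹ * (stereoHeight x * (u x / bracket x ^ p) ^ 2) ∂μ +
      (finrank ℝ E + (1 - α) * p / 2) * B *
        ∫ x, (bracket x ^ (2 * finrank ℝ E))⁻¹ *
          (stereoHeight x * (u x / bracket x ^ p) ^ (1 - α)) ∂μ = 0 := by
  have hK : ∀ s ∈ Icc c⁻¹ c, s ≠ 0 := fun s hs => ((inv_pos.2 hc).trans_le hs.1).ne'
  have hα' : 1 - α ≠ 0 := sub_ne_zero.2 hα.symm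
  have hrpow (r : ℝ) : ContinuousOn (fun s : ℝ => s ^ r) (Icc c⁻¹ c) :=
    continuousOn_id.rpow_const fun s hs => .inl (hK s hs)
  have hderiv : ∀ s ∈ Icc c⁻¹ c, HasDerivAt (fun s => A / 2 * s ^ 2 + B / (1 - α) * s ^ (1 - α))
      (A * s + B * s ^ (-α)) s := fun s hs => by
    refine (((hasDerivAt_pow 2 s).const_mul (A / 2)).add
      ((Real.hasDerivAt_rpow_const (.inl (hK s hs))).const_mul (B / (1 - α)))).congr_deriv ?_
    rw [sub_sub_cancel_left]
    field_simp
    push_cast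
    ring
  have hint_rpow (r : ℝ) := integrable_stereoHeight_mul_rpow (μ := μ) hn hu.continuous hc huK r
  have hint_sq := hint_rpow 2
  simp only [Real.rpow_two] at hint_sq
  have hKW := integral_stereoHeight_mul_eq_zero_of_rieszPotential_eq
    (g := fun s => A * s + B * s ^ (-α)) hn hp hu isCompact_Icc
    (.add (by fun_prop) (continuousOn_const.mul (hrpow _))) hderiv huK hueq
  rw [← integral_const_mul, ← integral_const_mul, ← integral_add (hint_sq.const_mul _)
    ((hint_rpow _).const_mul _), ← mul_zero (1 - α), ← hKW, ← integral_const_mul]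
  refine integral_congr_ae (.of_forall fun x => ?_)
  have hs := hK _ (huK x)
  beta_reduce
  generalize u x / bracket x ^ p = s at hs ⊢
  have hmul : s ^ (1 - α) = s * s ^ (-α) := by
    rw [sub_eq_neg_add, Real.rpow_add_one hs, mul_comm]
  rw [hmul]
  field_simp
  ring

end KazdanWarner

section CAlpha

variable {E : Type*} [SeminormedAddCommGroup E] {n m p : ℕ}

lemma div_bracket_pow_mem_Icc_iff (hp : 2 * m = n + p) (x : E) {a b c : ℝ} :
    a / bracket x ^ p ∈ Icc b c ↔
      b * (1 + ‖x‖ ^ 2) ^ ((2 * (m : ℝ) - n) / 2) ≤ a ∧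
        a ≤ c * (1 + ‖x‖ ^ 2) ^ ((2 * (m : ℝ) - n) / 2) := by
  have hpr : 2 * (m : ℝ) - n = p := by rw [sub_eq_iff_eq_add']; exact_mod_cast hp
  have hb := pow_pos (bracket_pos x) p
  rw [hpr, bracket_rpow, mem_Icc, le_div_iff₀ hb, div_le_iff₀ hb]

lemma two_div_pow_mul_sq_mul_stereoHeight (hp : 2 * m = n + p) (x : E) (a : ℝ) :
    (2 / (1 + ‖x‖ ^ 2)) ^ (2 * m) * a ^ 2 * ((1 - ‖x‖ ^ 2) / (1 + ‖x‖ ^ 2)) =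
      2 ^ (2 * m) * ((bracket x ^ (2 * n))⁻¹ * (stereoHeight x * (a / bracket x ^ p) ^ 2)) := by
  rw [two_div_pow_mul_pow (by omega : 2 * (2 * m) = 2 * n + p * 2), stereoHeight]
  ring

lemma two_div_rpow_mul_rpow_mul_stereoHeight (hp : 2 * m = n + p) (x : E) {a : ℝ} (ha : 0 < a)
    (α : ℝ) :
    (2 / (1 + ‖x‖ ^ 2)) ^ (-cAlpha n m α) * a ^ (1 - α) * ((1 - ‖x‖ ^ 2) / (1 + ‖x‖ ^ 2)) =
      2 ^ (-cAlpha n m α) *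
        ((bracket x ^ (2 * n))⁻¹ * (stereoHeight x * (a / bracket x ^ p) ^ (1 - α))) := by
  have hpr : 2 * (m : ℝ) = n + p := mod_cast hp
  have hexp : 2 * -cAlpha n m α = (2 * n : ℕ) + p * (1 - α) := by
    rw [cAlpha, hpr]
    push_cast
    ring
  rw [two_div_rpow_mul_rpow hexp x ha, stereoHeight]
  ring

lemma sphF_eq_bracket_pow_inv_mul (hp : 2 * m = n + p) (x : E) {a : ℝ} (ha : 0 < a) (ε α : ℝ) :
    ε * (2 / (1 + ‖x‖ ^ 2)) ^ (2 * m) * a +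
        (2 / (1 + ‖x‖ ^ 2)) ^ (((n : ℝ) + 2 * m) / 2 + α * ((n : ℝ) - 2 * m) / 2) * a ^ (-α) =
      (bracket x ^ (2 * n + p))⁻¹ * (ε * 2 ^ (2 * m) * (a / bracket x ^ p) +
        2 ^ (-cAlpha n m α) * (a / bracket x ^ p) ^ (-α)) := by
  have hpr : 2 * (m : ℝ) = n + p := mod_cast hp
  have hc : ((n : ℝ) + 2 * m) / 2 + α * ((n : ℝ) - 2 * m) / 2 = -cAlpha n m α := by
    rw [cAlpha]
    ring
  have hexp : 2 * -cAlpha n m α = (2 * n + p : ℕ) + p * -α := by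
    rw [cAlpha, hpr]
    push_cast
    ring
  have hlin := two_div_pow_mul_pow (by omega : 2 * (2 * m) = 2 * n + p + p * 1) x a
  rw [pow_one, pow_one] at hlin
  rw [hc, mul_assoc, hlin, two_div_rpow_mul_rpow hexp x ha]
  ring

end CAlpha

section General

variable {E : Type*} [NormedAddCommGroup E] [NormedSpace ℝ E] [FiniteDimensional ℝ E]
  [MeasurableSpace E] [BorelSpace E]

theorem stmt7_general (μ : Measure E) [μ.IsAddHaarMeasure] {n m : ℕ} (hn : finrank ℝ E = n)
    (hn0 : 0 < n) (hmn : n < 2 * m) {ε α γ : ℝ} (hα1 : α ≠ 1) {u : E → ℝ}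
    (hu : Differentiable ℝ u) (hupos : ∀ x, 0 < u x)
    (hbound : ∃ c : ℝ, 0 < c ∧ ∀ x,
      c⁻¹ * (1 + ‖x‖ ^ 2) ^ ((2 * (m : ℝ) - n) / 2) ≤ u x ∧
        u x ≤ c * (1 + ‖x‖ ^ 2) ^ ((2 * (m : ℝ) - n) / 2))
    (hueq : ∀ x, u x = γ * ∫ y, ‖x - y‖ ^ (2 * m - n) *
      (ε * (2 / (1 + ‖y‖ ^ 2)) ^ (2 * m) * u y +
        (2 / (1 + ‖y‖ ^ 2)) ^ (((n : ℝ) + 2 * m) / 2 + α * ((n : ℝ) - 2 * m) / 2) *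
          u y ^ (-α)) ∂μ) :
    Integrable (fun x =>
      (2 / (1 + ‖x‖ ^ 2)) ^ (2 * m) * u x ^ 2 * ((1 - ‖x‖ ^ 2) / (1 + ‖x‖ ^ 2))) μ ∧
    Integrable (fun x =>
      (2 / (1 + ‖x‖ ^ 2)) ^ (-cAlpha n m α) * u x ^ (1 - α) *
        ((1 - ‖x‖ ^ 2) / (1 + ‖x‖ ^ 2))) μ ∧
    ε * m * (1 - α) * ∫ x,
        (2 / (1 + ‖x‖ ^ 2)) ^ (2 * m) * u x ^ 2 * ((1 - ‖x‖ ^ 2) / (1 + ‖x‖ ^ 2)) ∂μ =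
      cAlpha n m α * ∫ x,
        (2 / (1 + ‖x‖ ^ 2)) ^ (-cAlpha n m α) * u x ^ (1 - α) *
          ((1 - ‖x‖ ^ 2) / (1 + ‖x‖ ^ 2)) ∂μ := by
  subst hn
  obtain ⟨p, hp⟩ := Nat.exists_eq_add_of_le hmn.le
  obtain ⟨c, hc, hbound⟩ := hbound
  have huK : ∀ x, u x / bracket x ^ p ∈ Icc c⁻¹ c := fun x =>
    (div_bracket_pow_mem_Icc_iff hp x).2 (hbound x)
  have hγ : γ ≠ 0 := by
    rintro rfl
    exact (hupos 0).ne' (by simpa using hueq 0)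
  have hpot : rieszPotential μ p (fun y => (bracket y ^ (2 * finrank ℝ E + p))⁻¹ *
      (γ * ε * 2 ^ (2 * m) * (u y / bracket y ^ p) +
        γ * 2 ^ (-cAlpha (finrank ℝ E) m α) * (u y / bracket y ^ p) ^ (-α))) = u := by
    ext x
    rw [hueq x, ← integral_const_mul]
    refine integral_congr_ae (.of_forall fun y => ?_)
    simp only [sphF_eq_bracket_pow_inv_mul hp y (hupos y), (by omega : 2 * m - finrank ℝ E = p)]
    ring
  have hKW := integral_stereoHeight_mul_sq_add_rpow hn0 (by omega : p ≠ 0) hu hα1 hc huK hpot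
  have hint (r : ℝ) := integrable_stereoHeight_mul_rpow (μ := μ) hn0 hu.continuous hc huK r
  have hint_sq := hint 2
  simp only [Real.rpow_two] at hint_sq
  simp only [two_div_pow_mul_sq_mul_stereoHeight hp,
    two_div_rpow_mul_rpow_mul_stereoHeight hp _ (hupos _), integral_const_mul]
  refine ⟨hint_sq.const_mul _, (hint _).const_mul _, mul_left_cancel₀ hγ ?_⟩
  have hpr : (finrank ℝ E + p : ℝ) = 2 * m := mod_cast hp.symm
  have hc_eq : finrank ℝ E + (1 - α) * p / 2 = -cAlpha (finrank ℝ E) m α := by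
    rw [cAlpha, ← hpr]
    ring
  rw [hc_eq, hpr] at hKW
  linear_combination hKW

end General

/-- Pohozaev identity for solutions of the integral equation
`u(x) = γ ∫ |x−y|^{2m−n} F_{ε,u}(y) dy`:
`ε m (1−α) ∫ f^{2m} u² (1−|x|²)/(1+|x|²) = c_α ∫ f^{−c_α} u^{1−α} (1−|x|²)/(1+|x|²)`,
both integrals converging absolutely. -/
theorem stmt7 (n m : ℕ) (hn : 3 ≤ n) (hodd : Odd n) (hmn : n < 2 * m)
    (ε : ℝ) (hε0 : 0 ≤ ε) (hε1 : ε < 1)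
    (α : ℝ) (hα0 : 0 < α) (hαc : α ≤ (2 * (m : ℝ) + n) / (2 * (m : ℝ) - n)) (hα1 : α ≠ 1)
    (γ : ℝ) (hγ : 0 < γ)
    (u : EuclideanSpace ℝ (Fin n) → ℝ) (husm : ContDiff ℝ (⊤ : ℕ∞) u)
    (hupos : ∀ x, 0 < u x)
    (hbound : ∃ c : ℝ, 0 < c ∧ ∀ x,
      c⁻¹ * (1 + ‖x‖ ^ 2) ^ ((2 * (m : ℝ) - n) / 2) ≤ u x ∧
        u x ≤ c * (1 + ‖x‖ ^ 2) ^ ((2 * (m : ℝ) - n) / 2))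
    (hueq : ∀ x, u x = γ * ∫ y, ‖x - y‖ ^ (2 * m - n) * sphF n m ε α u y) :
    Integrable (fun x : EuclideanSpace ℝ (Fin n) =>
      (2 / (1 + ‖x‖ ^ 2)) ^ (2 * m) * u x ^ 2 * ((1 - ‖x‖ ^ 2) / (1 + ‖x‖ ^ 2))) ∧
    Integrable (fun x : EuclideanSpace ℝ (Fin n) =>
      (2 / (1 + ‖x‖ ^ 2)) ^ (-(cAlpha n m α)) * u x ^ (1 - α) *
        ((1 - ‖x‖ ^ 2) / (1 + ‖x‖ ^ 2))) ∧
    ε * m * (1 - α) * ∫ x : EuclideanSpace ℝ (Fin n),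
        (2 / (1 + ‖x‖ ^ 2)) ^ (2 * m) * u x ^ 2 * ((1 - ‖x‖ ^ 2) / (1 + ‖x‖ ^ 2)) =
      cAlpha n m α * ∫ x : EuclideanSpace ℝ (Fin n),
        (2 / (1 + ‖x‖ ^ 2)) ^ (-(cAlpha n m α)) * u x ^ (1 - α) *
          ((1 - ‖x‖ ^ 2) / (1 + ‖x‖ ^ 2)) := by
  exact stmt7_general volume finrank_euclideanSpace_fin (by omega) hmn hα1
    (husm.differentiable (by simp)) hupos hbound hueq
end
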